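/- Let G = Θ(2,2,2k) with k ≥ 2, whose end vertices are u and v, and let L be an m-assignment for G with m ≥ 3 such that L(u) = L(v). Then P(G,L) ≥ P(G,m). -/

import Mathlib

/-!
Write `m = q + 2`, let `A = L(u) = L(v)`, and let `N(c,d)` be the number of ways to color the
internal vertices of the path of length `2k` when its ends have colors `c` and `d`.  Then
`P(G,L) = ∑_{c,d ∈ A} |L(2) \ {c,d}| · |L(3) \ {c,d}| · N(c,d)`, and the two cardinalities are at
least `q`, and at least `q + 1` when `c = d`.  Hence
`P(G,L) ≥ q² ∑_{c,d} N(c,d) + (2q+1) ∑_c N(c,c)`, with equality when all lists coincide.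

The first sum counts list colorings of a path, so it is at least `m (m-1)^(2k)`
(`le_sum_pathCount`).  The second one counts list colorings of the even cycle obtained by identifying
`u` and `v`, and it is at least `(m-1)^(2k) + (m-1)` (`le_cycleCount`).  Both bounds are attained
by constant lists.

For the cycle bound: if two adjacent lists differ, rotate the cycle so that they are the lists of the
first and the last vertex.  A color of the first vertex that is missing from the last list extends in
at least `(m-1)^(2k-1)` ways, and each of the other `m - 1` colors extends in at least
`((m-1)^(2k) - 1) / m` ways (`le_pathCount_odd`); this is enough because `(m-1)^(2k-2) ≥ m + 1`.
If no two adjacent lists differ, the lists are constant and the count is explicit.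
-/

/-- A proper `L`-coloring of `G`: each vertex gets a color from its list,
and adjacent vertices get different colors. -/
def IsProperListColoring {V : Type*} (G : SimpleGraph V) (L : V → Finset ℕ) (f : V → ℕ) : Prop :=
  (∀ v, f v ∈ L v) ∧ ∀ ⦃u w : V⦄, G.Adj u w → f u ≠ f w

/-- `P(G,L)`: the number of proper `L`-colorings of `G`. -/
noncomputable def numListColorings {V : Type*} (G : SimpleGraph V) (L : V → Finset ℕ) : ℕ :=
  Nat.card {f : V → ℕ // IsProperListColoring G L f}

/-- The chromatic polynomial `P(G,m)`: the number of proper colorings using colors from `{1,…,m}`. -/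
noncomputable def chromPoly {V : Type*} (G : SimpleGraph V) (m : ℕ) : ℕ :=
  numListColorings G (fun _ => Finset.Icc 1 m)

/-- The list color function `P_ℓ(G,m)`: the minimum number of proper `L`-colorings
over all `m`-assignments `L`. -/
noncomputable def listColorFn {V : Type*} (G : SimpleGraph V) (m : ℕ) : ℕ :=
  sInf {n | ∃ L : V → Finset ℕ, (∀ v, (L v).card = m) ∧ numListColorings G L = n}

/-- The generalized theta graph `Θ(2,2,2k)` on vertex set `Fin (2k+3)`:
`u = 0`, `v = 1`, the internal vertices of the two paths of length 2 are `2` and `3`,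
and the internal vertices `z_1, …, z_{2k-1}` of the path of length `2k` are `4, …, 2k+2`. -/
def thetaGraph (k : ℕ) : SimpleGraph (Fin (2*k+3)) :=
  SimpleGraph.fromRel (fun a b =>
    (a.val = 0 ∧ b.val = 2) ∨ (a.val = 2 ∧ b.val = 1) ∨
    (a.val = 0 ∧ b.val = 3) ∨ (a.val = 3 ∧ b.val = 1) ∨
    (a.val = 0 ∧ b.val = 4) ∨
    (4 ≤ a.val ∧ b.val = a.val + 1 ∧ a.val + 1 ≤ 2*k+2) ∨
    (a.val = 2*k+2 ∧ b.val = 1))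

/-- The number of colorings of a path with `j` internal vertices, with lists `M 0, …, M (j-1)`,
whose two end vertices have the prescribed colors `a` and `b`. -/
def pathCount : (ℕ → Finset ℕ) → ℕ → ℕ → ℕ → ℕ
  | _, 0, a, b => if a ≠ b then 1 else 0
  | M, j + 1, a, b => ∑ e ∈ M 0, if a ≠ e then pathCount (fun i => M (i + 1)) j e b else 0

/-- `pathCount` peels off the first internal vertex; this peels off the last one. -/
lemma pathCount_succ_last (j : ℕ) : ∀ (M : ℕ → Finset ℕ) (a b : ℕ),
    pathCount M (j + 1) a b = ∑ e ∈ M j, if e ≠ b then pathCount M j a e else 0 := by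
  induction j with
  | zero =>
    intro M a b
    simp only [pathCount]
    refine Finset.sum_congr rfl fun e _ => ?_
    split_ifs <;> rfl
  | succ j ih =>
    intro M a b
    have h : ∀ e, pathCount M (j + 1) a e =
        ∑ x ∈ M 0, if a ≠ x then pathCount (fun i => M (i + 1)) j x e else 0 := fun _ => rfl
    conv_rhs => simp only [h]
    rw [pathCount]
    simp only [ih, Finset.ite_sum_zero]
    rw [Finset.sum_comm]
    refine Finset.sum_congr rfl fun e _ => Finset.sum_congr rfl fun x _ => ?_
    split_ifs <;> rfl

/-! ### Lower bounds for paths -/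

lemma card_ne_ge {q : ℕ} {S : Finset ℕ} (hS : S.card = q + 2) (a : ℕ) :
    q + 1 ≤ (S.filter fun x => x ≠ a).card := by
  rw [Finset.filter_ne']
  have := Finset.pred_card_le_card_erase (s := S) (a := a)
  omega

lemma card_ne_ne_ge {q : ℕ} {S : Finset ℕ} (hS : S.card = q + 2) (a b : ℕ) :
    q ≤ (S.filter fun x => x ≠ a ∧ x ≠ b).card := by
  rw [← Finset.filter_filter, Finset.filter_ne', Finset.filter_ne']
  have := Finset.pred_card_le_card_erase (s := S) (a := a)
  have := Finset.pred_card_le_card_erase (s := S.erase a) (a := b)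
  omega

/-- Summing over the colors `d` of the final vertex first: each color `e` of the last internal vertex is
counted once for every admissible `d ≠ e`. -/
lemma sum_pathCount_succ (M : ℕ → Finset ℕ) (S : Finset ℕ) (p : ℕ → Prop) [DecidablePred p]
    (j a : ℕ) :
    (∑ d ∈ S, if p d then pathCount M (j + 1) a d else 0) =
      ∑ e ∈ M j, (S.filter fun d => d ≠ e ∧ p d).card * pathCount M j a e := by
  simp only [pathCount_succ_last, Finset.ite_sum_zero]
  rw [Finset.sum_comm]
  refine Finset.sum_congr rfl fun e _ => ?_
  rw [Finset.card_filter, Finset.sum_mul]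
  refine Finset.sum_congr rfl fun d _ => ?_
  by_cases h1 : p d <;> by_cases h2 : e = d <;> simp [h1, h2, eq_comm]

lemma le_sum_pathCount {q : ℕ} {M : ℕ → Finset ℕ} (hM : ∀ i, (M i).card = q + 2) (j : ℕ) :
    ∀ {S : Finset ℕ}, S.card = q + 2 → ∀ a, (q + 1) ^ (j + 1) ≤ ∑ d ∈ S, pathCount M j a d := by
  induction j with
  | zero =>
    intro S hS a
    have := card_ne_ge hS a
    rw [Finset.card_filter] at this
    simpa [pathCount, eq_comm] using this
  | succ j ih =>
    intro S hS a
    have h := sum_pathCount_succ M S (fun _ => True) j a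
    simp only [if_true, and_true] at h
    rw [h, pow_succ']
    calc (q + 1) * (q + 1) ^ (j + 1) ≤ (q + 1) * ∑ e ∈ M j, pathCount M j a e :=
          Nat.mul_le_mul_left _ (ih (hM j) a)
      _ ≤ _ := by
          rw [Finset.mul_sum]
          exact Finset.sum_le_sum fun e _ => Nat.mul_le_mul_right _ (card_ne_ge hS e)

/-- For each color of the vertex with list `M j`, the next vertex has at least `q` colors that differ
from it and from `d`, and for some color `e ∈ M j` it has at least `q + 1`. -/
lemma pathCount_two_step {q : ℕ} {M : ℕ → Finset ℕ} (hM : ∀ i, (M i).card = q + 2) (j a d : ℕ) :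
    ∃ e, q * (q + 1) ^ (j + 1) + pathCount M j a e ≤ pathCount M (j + 2) a d := by
  have key : ∃ e ∈ M j, q + 1 ≤ ((M (j + 1)).filter fun x => x ≠ e ∧ x ≠ d).card := by
    by_cases hd : d ∈ M j
    · refine ⟨d, hd, ?_⟩
      simpa using card_ne_ge (hM (j + 1)) d
    · by_cases hd' : d ∈ M (j + 1)
      · -- The two lists have the same size and differ, so some `e ∈ M j` is missing from `M (j + 1)`.
        obtain ⟨e, he, he'⟩ : ∃ e ∈ M j, e ∉ M (j + 1) := by
          by_contra! h
          have : M j = M (j + 1) := Finset.eq_of_subset_of_card_le h (by rw [hM, hM])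
          exact hd (this ▸ hd')
        refine ⟨e, he, (card_ne_ge (hM (j + 1)) d).trans (Finset.card_le_card fun x hx => ?_)⟩
        simp only [Finset.mem_filter] at hx ⊢
        exact ⟨hx.1, fun h => he' (h ▸ hx.1), hx.2⟩
      · obtain ⟨e, he⟩ : (M j).Nonempty := Finset.card_pos.1 (by rw [hM]; omega)
        refine ⟨e, he, (card_ne_ge (hM (j + 1)) e).trans (Finset.card_le_card fun x hx => ?_)⟩
        simp only [Finset.mem_filter] at hx ⊢
        exact ⟨hx.1, hx.2, fun h => hd' (h ▸ hx.1)⟩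
  obtain ⟨e, he, hc⟩ := key
  refine ⟨e, ?_⟩
  rw [pathCount_succ_last, sum_pathCount_succ M (M (j + 1)) (fun x => x ≠ d) j a]
  calc q * (q + 1) ^ (j + 1) + pathCount M j a e
      ≤ q * (∑ x ∈ M j, pathCount M j a x) + pathCount M j a e := by
        gcongr
        exact le_sum_pathCount hM j (hM j) a
    _ = ∑ x ∈ M j, (q * pathCount M j a x + if x = e then pathCount M j a x else 0) := by
        rw [Finset.sum_add_distrib, Finset.mul_sum, Finset.sum_ite_eq' (M j) e, if_pos he]
    _ ≤ _ := by
        refine Finset.sum_le_sum fun x _ => ?_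
        split_ifs with h
        · subst h
          calc _ = (q + 1) * pathCount M j a x := by ring
            _ ≤ _ := Nat.mul_le_mul_right _ hc
        · exact Nat.mul_le_mul_right _ (card_ne_ne_ge (hM (j + 1)) x d)

/-- For an odd number of internal vertices and lists of size `m`, every choice of end colors extends
in at least `((m-1)^n - 1) / m` ways, where `n` is the length of the path. -/
lemma le_pathCount_odd {q : ℕ} {M : ℕ → Finset ℕ} (hM : ∀ i, (M i).card = q + 2) (i a : ℕ) :
    ∀ d, (q + 1) ^ (2 * i + 2) ≤ (q + 2) * pathCount M (2 * i + 1) a d + 1 := by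
  induction i with
  | zero =>
    intro d
    have h : pathCount M 1 a d = ((M 0).filter fun x => x ≠ a ∧ x ≠ d).card := by
      rw [Finset.card_filter]
      simp only [pathCount]
      refine Finset.sum_congr rfl fun x _ => ?_
      by_cases h1 : a = x <;> by_cases h2 : x = d <;> simp [h1, h2, Ne.symm, eq_comm]
    have h2 := card_ne_ne_ge (hM 0) a d
    rw [← h] at h2
    simp only [mul_zero, zero_add]
    nlinarith
  | succ i ih =>
    intro d
    obtain ⟨e, he⟩ := pathCount_two_step hM (2 * i + 1) a d
    have h1 := ih e
    have e1 : 2 * (i + 1) + 1 = 2 * i + 1 + 2 := by ring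
    have e2 : 2 * (i + 1) + 2 = 2 * i + 2 + 2 := by ring
    rw [e1, e2]
    have h2 := Nat.mul_le_mul_left (q + 2) he
    have e3 : (q + 1) ^ (2 * i + 2 + 2) = (q + 2) * (q * (q + 1) ^ (2 * i + 1 + 1))
      + (q + 1) ^ (2 * i + 2) := by ring
    rw [e3]
    linarith

/-! ### Constant lists -/

lemma sum_pathCount_const {q : ℕ} {A : Finset ℕ} (hA : A.card = q + 2) {a : ℕ} (ha : a ∈ A)
    (j : ℕ) : ∑ d ∈ A, pathCount (fun _ => A) j a d = (q + 1) ^ (j + 1) := by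
  have hc : ∀ e ∈ A, (A.filter fun d => d ≠ e).card = q + 1 := fun e he => by
    rw [Finset.filter_ne', Finset.card_erase_of_mem he, hA]; rfl
  induction j with
  | zero =>
    have := hc a ha
    rw [Finset.card_filter] at this
    simpa [pathCount, eq_comm] using this
  | succ j ih =>
    have h := sum_pathCount_succ (fun _ => A) A (fun _ => True) j a
    simp only [if_true, and_true] at h
    rw [h, pow_succ', ← ih, Finset.mul_sum]
    exact Finset.sum_congr rfl fun e he => by rw [hc e he]

lemma pathCount_const {q : ℕ} {A : Finset ℕ} (hA : A.card = q + 2) {a : ℕ} (ha : a ∈ A)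
    (j : ℕ) : ∀ d ∈ A, ((q : ℤ) + 2) * pathCount (fun _ => A) j a d =
      ((q : ℤ) + 1) ^ (j + 1) + (-1) ^ (j + 1) * ((if a = d then (q : ℤ) + 2 else 0) - 1) := by
  induction j with
  | zero =>
    intro d _
    by_cases h : a = d <;> simp [pathCount, h] <;> ring
  | succ j ih =>
    intro d hd
    have h1 : pathCount (fun _ => A) (j + 1) a d + pathCount (fun _ => A) j a d =
        (q + 1) ^ (j + 1) := by
      rw [← sum_pathCount_const hA ha j, pathCount_succ_last, ← Finset.sum_filter,
        Finset.filter_ne', Finset.sum_erase_add _ _ hd]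
    have h2 := ih d hd
    have h3 : (pathCount (fun _ => A) (j + 1) a d : ℤ) =
        ((q : ℤ) + 1) ^ (j + 1) - pathCount (fun _ => A) j a d := by
      rw [eq_sub_iff_add_eq]
      exact_mod_cast h1
    rw [h3, mul_sub, h2]
    ring

/-! ### Even cycles -/

/-- The number of list colorings of the cycle with vertices `0, …, j` and lists
`C 0, …, C j`. -/
def cycleCount (C : ℕ → Finset ℕ) (j : ℕ) : ℕ :=
  ∑ c ∈ C 0, pathCount (fun i => C (i + 1)) j c c

lemma pathCount_congr (j : ℕ) : ∀ {M M' : ℕ → Finset ℕ}, (∀ i < j, M i = M' i) → ∀ a b,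
    pathCount M j a b = pathCount M' j a b := by
  induction j with
  | zero => intros; rfl
  | succ j ih =>
    intro M M' h a b
    simp only [pathCount]
    rw [h 0 (by omega)]
    refine Finset.sum_congr rfl fun e _ => ?_
    rw [ih (M := fun i => M (i + 1)) (M' := fun i => M' (i + 1)) (fun i hi => h _ (by omega))]

lemma cycleCount_rotate {C : ℕ → Finset ℕ} {j : ℕ} (h : C (j + 2) = C 0) :
    cycleCount (fun i => C (i + 1)) (j + 1) = cycleCount C (j + 1) := by
  simp only [cycleCount]
  rw [Finset.sum_congr rfl fun c _ => pathCount_succ_last j (fun i => C (i + 1 + 1)) c c]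
  simp only [pathCount]
  rw [h, Finset.sum_comm]

lemma cycleCount_const {q : ℕ} {A : Finset ℕ} (hA : A.card = q + 2) (i : ℕ) :
    cycleCount (fun _ => A) (2 * i + 1) = (q + 1) ^ (2 * i + 2) + (q + 1) := by
  have h : ((q : ℤ) + 2) * (cycleCount (fun _ => A) (2 * i + 1) : ℤ) =
      ((q : ℤ) + 2) * (((q : ℤ) + 1) ^ (2 * i + 2) + (q + 1)) := by
    have hp : (-1 : ℤ) ^ (2 * i + 1 + 1) = 1 := by
      rw [show 2 * i + 1 + 1 = 2 * (i + 1) by ring, pow_mul]; simp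
    rw [cycleCount, Nat.cast_sum, Finset.mul_sum,
      Finset.sum_congr rfl fun c hc => pathCount_const hA hc (2 * i + 1) c hc]
    rw [hp]
    simp only [if_true, Finset.sum_const, hA, nsmul_eq_mul]
    push_cast
    ring
  have h' := mul_left_cancel₀ (by positivity) h
  exact_mod_cast h'

/-- The cycle bound when the lists of the first and the last vertex differ. -/
lemma le_cycleCount_of_ne {q : ℕ} (hq : 1 ≤ q) {C : ℕ → Finset ℕ} (hC : ∀ i, (C i).card = q + 2)
    {i : ℕ} (hi : 1 ≤ i) (hne : C 0 ≠ C (2 * i + 1)) :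
    (q + 1) ^ (2 * i + 2) + (q + 1) ≤ cycleCount C (2 * i + 1) := by
  obtain ⟨c, hc, hc'⟩ : ∃ c ∈ C 0, c ∉ C (2 * i + 1) := by
    by_contra! h
    exact hne (Finset.eq_of_subset_of_card_le h (by rw [hC, hC]))
  have hM : ∀ l, ((fun l => C (l + 1)) l).card = q + 2 := fun l => hC _
  have h1 : (q + 1) ^ (2 * i + 1) ≤ pathCount (fun l => C (l + 1)) (2 * i + 1) c c := by
    rw [pathCount_succ_last]
    refine (le_sum_pathCount hM (2 * i) (hC (2 * i + 1)) c).trans_eq ?_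
    refine Finset.sum_congr rfl fun e he => ?_
    rw [if_pos]
    rintro rfl
    exact hc' he
  have h2 : (q + 1) * (q + 1) ^ (2 * i + 2) ≤
      (q + 2) * (∑ x ∈ (C 0).erase c, pathCount (fun l => C (l + 1)) (2 * i + 1) x x)
        + (q + 1) := by
    have hcard : ((C 0).erase c).card = q + 1 := by
      rw [Finset.card_erase_of_mem hc, hC]; rfl
    calc _ = ∑ x ∈ (C 0).erase c, (q + 1) ^ (2 * i + 2) := by simp [hcard]
      _ ≤ ∑ x ∈ (C 0).erase c,
          ((q + 2) * pathCount (fun l => C (l + 1)) (2 * i + 1) x x + 1) :=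
        Finset.sum_le_sum fun x _ => le_pathCount_odd hM i x x
      _ = _ := by rw [Finset.sum_add_distrib, ← Finset.mul_sum]; simp [hcard]
  have h3 : cycleCount C (2 * i + 1) =
      (∑ x ∈ (C 0).erase c, pathCount (fun l => C (l + 1)) (2 * i + 1) x x)
        + pathCount (fun l => C (l + 1)) (2 * i + 1) c c :=
    (Finset.sum_erase_add _ _ hc).symm
  have h4 : q + 3 ≤ (q + 1) ^ (2 * i) := by
    calc q + 3 ≤ (q + 1) ^ 2 := by nlinarith
      _ ≤ _ := Nat.pow_le_pow_right (by omega) (by omega)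
  rw [h3]
  refine Nat.le_of_mul_le_mul_left (c := q + 2) ?_ (by omega)
  have h5 := Nat.mul_le_mul_left (q + 2) h1
  have h6 := Nat.mul_le_mul_left (q + 1) h4
  have e1 : (q + 1) ^ (2 * i + 1) = (q + 1) * (q + 1) ^ (2 * i) := by ring
  have e2 : (q + 1) ^ (2 * i + 2) = (q + 1) * ((q + 1) * (q + 1) ^ (2 * i)) := by ring
  rw [e1] at h5
  rw [e2] at h2 ⊢
  nlinarith

lemma le_cycleCount_periodic {q : ℕ} (hq : 1 ≤ q) {i : ℕ} (hi : 1 ≤ i) {C : ℕ → Finset ℕ}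
    (hC : ∀ l, (C l).card = q + 2) (hper : ∀ l, C (l + (2 * i + 2)) = C l) :
    (q + 1) ^ (2 * i + 2) + (q + 1) ≤ cycleCount C (2 * i + 1) := by
  have hrot : ∀ s, cycleCount (fun l => C (l + s)) (2 * i + 1) = cycleCount C (2 * i + 1) := by
    intro s
    induction s with
    | zero => rfl
    | succ s ih =>
      rw [← ih, ← cycleCount_rotate (C := fun l => C (l + s)) (j := 2 * i)]
      · congr 1
        funext l
        congr 1
        ring
      · simpa [add_comm] using hper s
  by_contra hlt
  have hstep : ∀ s, C (s + (2 * i + 1)) = C s := by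
    intro s
    by_contra hne
    refine hlt ?_
    rw [← hrot s]
    refine le_cycleCount_of_ne hq (C := fun l => C (l + s)) (fun l => hC _) hi ?_
    simp only [zero_add]
    rw [add_comm (2 * i + 1) s]
    exact fun h => hne h.symm
  have hconst : ∀ s, C s = C 0 := by
    intro s
    induction s with
    | zero => rfl
    | succ s ih => rw [← hstep (s + 1), ← ih, ← hper s]; congr 1; ring
  have : C = fun _ => C 0 := funext hconst
  rw [this, cycleCount_const (hC 0)] at hlt
  exact hlt le_rfl

/-- An even cycle of length at least four has at least as many list colorings from lists of size
`m ≥ 3` as from constant lists. -/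
lemma le_cycleCount {q : ℕ} (hq : 1 ≤ q) {i : ℕ} (hi : 1 ≤ i) {A : Finset ℕ} {M : ℕ → Finset ℕ}
    (hA : A.card = q + 2) (hM : ∀ l, (M l).card = q + 2) :
    (q + 1) ^ (2 * i + 2) + (q + 1) ≤ ∑ c ∈ A, pathCount M (2 * i + 1) c c := by
  -- The cyclic sequence `A, M 0, …, M (2i), A, M 0, …`.
  let C : ℕ → Finset ℕ := fun l =>
    if l % (2 * i + 2) = 0 then A else M (l % (2 * i + 2) - 1)
  have h := le_cycleCount_periodic hq hi (C := C)
    (fun l => by simp only [C]; split_ifs <;> simp [hA, hM])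
    (fun l => by simp only [C, Nat.add_mod_right])
  refine h.trans_eq ?_
  have h0 : C 0 = A := by simp [C]
  rw [cycleCount, h0]
  refine Finset.sum_congr rfl fun c _ => pathCount_congr _ (fun l hl => ?_) _ _
  have : (l + 1) % (2 * i + 2) = l + 1 := Nat.mod_eq_of_lt (by omega)
  simp [C, this]

/-! ### Colorings of the theta graph -/

/-- `g` colors the internal vertices of a path properly when its ends have colors `a` and `b`. -/
def IsPathChain : (n : ℕ) → ℕ → (Fin n → ℕ) → ℕ → Prop
  | 0, a, _, b => a ≠ b
  | n + 1, a, g, b => a ≠ g 0 ∧ IsPathChain n (g 0) (Fin.tail g) b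

lemma isPathChain_succ_iff (n : ℕ) : ∀ (a : ℕ) (g : Fin (n + 1) → ℕ) (b : ℕ),
    IsPathChain (n + 1) a g b ↔
      a ≠ g 0 ∧ (∀ i : Fin n, g i.castSucc ≠ g i.succ) ∧ g (Fin.last n) ≠ b := by
  induction n with
  | zero => intro a g b; simp [IsPathChain]
  | succ n ih =>
    intro a g b
    rw [IsPathChain, ih, Fin.forall_fin_succ (P := fun i => g i.castSucc ≠ g i.succ)]
    simp only [Fin.tail, Fin.succ_last, Fin.castSucc_zero, ← Fin.succ_castSucc, and_assoc]

lemma sum_piFinset_succ {n : ℕ} (L : Fin (n + 1) → Finset ℕ) (h : (Fin (n + 1) → ℕ) → ℕ) :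
    ∑ f ∈ Fintype.piFinset L, h f =
      ∑ a ∈ L 0, ∑ g ∈ Fintype.piFinset (Fin.tail L), h (Fin.cons a g) := by
  rw [← Finset.sum_product']
  refine Finset.sum_bij' (fun f _ => (f 0, Fin.tail f)) (fun p _ => Fin.cons p.1 p.2) ?_ ?_ ?_ ?_ ?_
  · intro f hf
    rw [Fintype.mem_piFinset] at hf
    simp only [Finset.mem_product, Fintype.mem_piFinset]
    exact ⟨hf 0, fun i => hf i.succ⟩
  · rintro ⟨a, g⟩ hp
    simp only [Finset.mem_product, Fintype.mem_piFinset] at hp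
    rw [Fintype.mem_piFinset]
    intro i
    refine Fin.cases ?_ (fun i => ?_) i
    · exact hp.1
    · exact hp.2 i
  · intro f _; simp
  · rintro ⟨a, g⟩ _; simp
  · intro f _; simp

open Classical in
lemma sum_isPathChain (n : ℕ) : ∀ (M : ℕ → Finset ℕ) (a b : ℕ),
    (∑ g ∈ Fintype.piFinset (fun i : Fin n => M i), if IsPathChain n a g b then 1 else 0) =
      pathCount M n a b := by
  induction n with
  | zero => intro M a b; by_cases h : a = b <;> simp [IsPathChain, pathCount, h]
  | succ n ih =>
    intro M a b
    rw [sum_piFinset_succ, pathCount]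
    refine Finset.sum_congr rfl fun e _ => ?_
    rw [← ih (fun i => M (i + 1)) e b]
    simp only [IsPathChain, Fin.cons_zero, Fin.tail_cons]
    by_cases h : a = e
    · simp [h]
    · simp only [ne_eq, h, not_false_eq_true, true_and, if_true]
      rfl

/-- The number of colors in `S` different from both `c` and `d`. -/
def freeColors (S : Finset ℕ) (c d : ℕ) : ℕ := (S.filter fun x => x ≠ c ∧ x ≠ d).card

/-- The edge relation of the theta graph whose long path has `n + 1` internal vertices. -/
def ThetaRel (n a b : ℕ) : Prop :=
  (a = 0 ∧ b = 2) ∨ (a = 2 ∧ b = 1) ∨ (a = 0 ∧ b = 3) ∨ (a = 3 ∧ b = 1) ∨ (a = 0 ∧ b = 4) ∨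
    (4 ≤ a ∧ b = a + 1 ∧ a + 1 ≤ n + 4) ∨ (a = n + 4 ∧ b = 1)

lemma thetaRel_proper_iff {n : ℕ} (a b x y : ℕ) (g : Fin (n + 1) → ℕ) :
    (∀ i j : Fin (n + 5), ThetaRel n i j →
      (Fin.cons a (Fin.cons b (Fin.cons x (Fin.cons y g))) : Fin (n + 5) → ℕ) i ≠
      (Fin.cons a (Fin.cons b (Fin.cons x (Fin.cons y g))) : Fin (n + 5) → ℕ) j) ↔
    ((x ≠ a ∧ x ≠ b) ∧ (y ≠ a ∧ y ≠ b) ∧ IsPathChain (n + 1) a g b) := by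
  set f : Fin (n + 5) → ℕ := Fin.cons a (Fin.cons b (Fin.cons x (Fin.cons y g))) with hf
  have f0 : ∀ h, f ⟨0, h⟩ = a := fun _ => rfl
  have f1 : ∀ h, f ⟨1, h⟩ = b := fun _ => rfl
  have f2 : ∀ h, f ⟨2, h⟩ = x := fun _ => rfl
  have f3 : ∀ h, f ⟨3, h⟩ = y := fun _ => rfl
  have f4 : ∀ t (h : t + 4 < n + 5), f ⟨t + 4, h⟩ = g ⟨t, by omega⟩ := fun _ _ => rfl
  rw [isPathChain_succ_iff]
  constructor
  · intro h
    refine ⟨⟨?_, ?_⟩, ⟨?_, ?_⟩, ?_, ?_, ?_⟩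
    · exact (h ⟨0, by omega⟩ ⟨2, by omega⟩ (by simp [ThetaRel])).symm
    · exact h ⟨2, by omega⟩ ⟨1, by omega⟩ (by simp [ThetaRel])
    · exact (h ⟨0, by omega⟩ ⟨3, by omega⟩ (by simp [ThetaRel])).symm
    · exact h ⟨3, by omega⟩ ⟨1, by omega⟩ (by simp [ThetaRel])
    · exact h ⟨0, by omega⟩ ⟨4, by omega⟩ (by simp [ThetaRel])
    · rintro ⟨i, hi⟩
      exact h ⟨i + 4, by omega⟩ ⟨i + 1 + 4, by omega⟩ (Or.inr (Or.inr (Or.inr (Or.inr (Or.inr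
        (Or.inl ⟨Nat.le_add_left 4 i, Nat.add_right_comm i 1 4, Nat.add_le_add_right hi 4⟩))))))
    · exact h ⟨n + 4, by omega⟩ ⟨1, by omega⟩ (by simp [ThetaRel])
  · rintro ⟨⟨h1, h2⟩, ⟨h3, h4⟩, h5, h6, h7⟩ ⟨i, hi⟩ ⟨j, hj⟩ hr
    simp only [ThetaRel] at hr
    rcases hr with ⟨rfl, rfl⟩ | ⟨rfl, rfl⟩ | ⟨rfl, rfl⟩ | ⟨rfl, rfl⟩ | ⟨rfl, rfl⟩ |
      ⟨hi4, rfl, hle⟩ | ⟨rfl, rfl⟩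
    · exact h1.symm
    · exact h2
    · exact h3.symm
    · exact h4
    · exact h5
    · obtain ⟨t, rfl⟩ : ∃ t, i = t + 4 := ⟨i - 4, by omega⟩
      exact h6 ⟨t, by omega⟩
    · exact h7

lemma numListColorings_eq_sum {V : Type*} [Fintype V] [DecidableEq V] (G : SimpleGraph V)
    (L : V → Finset ℕ) (p : (V → ℕ) → Prop) [DecidablePred p]
    (hp : ∀ f, (∀ ⦃u w⦄, G.Adj u w → f u ≠ f w) ↔ p f) :
    numListColorings G L = ∑ f ∈ Fintype.piFinset L, if p f then 1 else 0 := by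
  rw [← Finset.card_filter, numListColorings, ← Nat.card_eq_finsetCard]
  refine Nat.card_congr (Equiv.subtypeEquivRight fun f => ?_)
  rw [Finset.mem_filter, Fintype.mem_piFinset, IsProperListColoring, hp]

/-- The number of list colorings, summed over the colors `c`, `d` of the two end vertices.  The size
`N` of the vertex type is only propositionally equal to `n + 5`, to fit `2 * k + 3`. -/
lemma numListColorings_theta {N n : ℕ} (hN : N = n + 5) (G : SimpleGraph (Fin N))
    (hG : ∀ a b, G.Adj a b ↔ a ≠ b ∧ (ThetaRel n a b ∨ ThetaRel n b a))
    (L : Fin N → Finset ℕ) (M : ℕ → Finset ℕ) (i0 i1 i2 i3 : Fin N)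
    (h0 : i0.val = 0) (h1 : i1.val = 1) (h2 : i2.val = 2) (h3 : i3.val = 3)
    (hM : ∀ t (h : t + 4 < N), M t = L ⟨t + 4, h⟩) :
    numListColorings G L = ∑ c ∈ L i0, ∑ d ∈ L i1,
      freeColors (L i2) c d * freeColors (L i3) c d * pathCount M (n + 1) c d := by
  classical
  subst hN
  have g0 : i0 = ⟨0, by omega⟩ := Fin.ext h0
  have g1 : i1 = ⟨1, by omega⟩ := Fin.ext h1
  have g2 : i2 = ⟨2, by omega⟩ := Fin.ext h2
  have g3 : i3 = ⟨3, by omega⟩ := Fin.ext h3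
  rw [g0, g1, g2, g3]
  rw [numListColorings_eq_sum G L (fun f => ∀ i j : Fin (n + 5), ThetaRel n i j → f i ≠ f j)]
  swap
  · intro f
    constructor
    · intro h i j hij
      refine h ((hG i j).2 ⟨?_, Or.inl hij⟩)
      rintro rfl
      simp only [ThetaRel] at hij
      omega
    · intro h i j hij
      rcases ((hG i j).1 hij).2 with h' | h'
      · exact h _ _ h'
      · exact (h _ _ h').symm
  rw [sum_piFinset_succ]
  refine Finset.sum_congr rfl fun c _ => ?_
  rw [sum_piFinset_succ]
  refine Finset.sum_congr rfl fun d _ => ?_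
  rw [sum_piFinset_succ, freeColors, freeColors, Finset.card_filter, Finset.card_filter,
    Finset.sum_mul_sum, Finset.sum_mul]
  refine Finset.sum_congr rfl fun x _ => ?_
  rw [sum_piFinset_succ, Finset.sum_mul]
  refine Finset.sum_congr rfl fun y _ => ?_
  simp only [thetaRel_proper_iff]
  rw [← sum_isPathChain, Finset.mul_sum]
  have hL : (Fin.tail (Fin.tail (Fin.tail (Fin.tail L)))) = fun i : Fin (n + 1) => M i := by
    funext i
    exact (hM i (by omega)).symm
  rw [hL]
  refine Finset.sum_congr rfl fun g _ => ?_
  by_cases hx : x ≠ c ∧ x ≠ d <;> by_cases hy : y ≠ c ∧ y ≠ d <;> simp [hx, hy]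

lemma thetaGraph_adj_iff (k n : ℕ) (hn : 2 * k = n + 2) (a b : Fin (2 * k + 3)) :
    (thetaGraph k).Adj a b ↔ a ≠ b ∧ (ThetaRel n a b ∨ ThetaRel n b a) := by
  simp only [thetaGraph, SimpleGraph.fromRel_adj, ThetaRel, hn]

/-- The contribution of the two short paths is at least `q²`, and at least `(q+1)² = q² + (2q+1)` on
the diagonal. -/
lemma freeColors_mul_ge {q : ℕ} {S T : Finset ℕ} (hS : S.card = q + 2) (hT : T.card = q + 2)
    (c d : ℕ) : q ^ 2 + (if c = d then 2 * q + 1 else 0) ≤ freeColors S c d * freeColors T c d := by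
  split_ifs with h
  · subst h
    have h1 := card_ne_ge hS c
    have h2 := card_ne_ge hT c
    simp only [freeColors, and_self]
    calc _ = (q + 1) * (q + 1) := by ring
      _ ≤ _ := Nat.mul_le_mul h1 h2
  · rw [add_zero, sq]
    exact Nat.mul_le_mul (card_ne_ne_ge hS c d) (card_ne_ne_ge hT c d)

lemma freeColors_self_mul {q : ℕ} {A : Finset ℕ} (hA : A.card = q + 2) {c d : ℕ} (hc : c ∈ A)
    (hd : d ∈ A) :
    freeColors A c d * freeColors A c d = q ^ 2 + (if c = d then 2 * q + 1 else 0) := by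
  have h : freeColors A c d = if c = d then q + 1 else q := by
    rw [freeColors, ← Finset.filter_filter, Finset.filter_ne', Finset.filter_ne']
    split_ifs with h
    · subst h
      simp [Finset.card_erase_of_mem hc, hA]
    · rw [Finset.card_erase_of_mem (Finset.mem_erase.2 ⟨Ne.symm h, hd⟩),
        Finset.card_erase_of_mem hc, hA]
      rfl
  rw [h]
  split_ifs <;> ring

lemma sum_weight (q : ℕ) (A : Finset ℕ) (F : ℕ → ℕ → ℕ) :
    ∑ c ∈ A, ∑ d ∈ A, (q ^ 2 + (if c = d then 2 * q + 1 else 0)) * F c d =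
      q ^ 2 * (∑ c ∈ A, ∑ d ∈ A, F c d) + (2 * q + 1) * ∑ c ∈ A, F c c := by
  rw [Finset.mul_sum, Finset.mul_sum, ← Finset.sum_add_distrib]
  refine Finset.sum_congr rfl fun c hc => ?_
  simp only [add_mul, Finset.sum_add_distrib, ite_mul, zero_mul, Finset.sum_ite_eq, hc, if_true,
    Finset.mul_sum]

/-- Let `G = Θ(2,2,2k)` with `k ≥ 2`, end vertices `u = 0` and `v = 1`, and let `L` be an
`m`-assignment for `G` with `m ≥ 3` such that `L(u) = L(v)`.  Then `P(G,L) ≥ P(G,m)`. -/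
theorem theta_sameLists_ge_chromPoly (k m : ℕ) (hk : 2 ≤ k) (hm : 3 ≤ m)
    (L : Fin (2*k+3) → Finset ℕ) (hL : ∀ v, (L v).card = m) (huv : L 0 = L 1) :
    chromPoly (thetaGraph k) m ≤ numListColorings (thetaGraph k) L := by
  obtain ⟨q, rfl⟩ : ∃ q, m = q + 2 := ⟨m - 2, by omega⟩
  obtain ⟨i, rfl⟩ : ∃ i, k = i + 1 := ⟨k - 1, by omega⟩
  have hN : 2 * (i + 1) + 3 = 2 * i + 5 := by ring
  have hadj := thetaGraph_adj_iff (i + 1) (2 * i) (by ring)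
  have hI : (Finset.Icc 1 (q + 2)).card = q + 2 := by simp
  have e0 : ((0 : Fin (2 * (i + 1) + 3))).val = 0 := rfl
  have e1 : ((1 : Fin (2 * (i + 1) + 3))).val = 1 := by
    rw [Fin.val_one']; exact Nat.mod_eq_of_lt (by omega)
  -- The lists of the long path, extended beyond its last internal vertex by `L 0`.
  let M : ℕ → Finset ℕ := fun t => if h : t + 4 < 2 * (i + 1) + 3 then L ⟨t + 4, h⟩ else L 0
  have hM : ∀ t, (M t).card = q + 2 := fun t => by simp only [M]; split_ifs <;> exact hL _
  rw [chromPoly, numListColorings_theta hN _ hadj (fun _ => Finset.Icc 1 (q + 2))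
    (fun _ => Finset.Icc 1 (q + 2)) 0 1 ⟨2, by omega⟩ ⟨3, by omega⟩ e0 e1 rfl rfl
    (fun _ _ => rfl),
    numListColorings_theta hN _ hadj L M 0 1 ⟨2, by omega⟩ ⟨3, by omega⟩ e0 e1 rfl rfl
    (fun t h => by simp only [M, dif_pos h]), ← huv]
  have hconst := cycleCount_const hI i
  simp only [cycleCount] at hconst
  rw [Finset.sum_congr rfl fun c hc => Finset.sum_congr rfl fun d hd =>
    congrArg (· * pathCount (fun _ => Finset.Icc 1 (q + 2)) (2 * i + 1) c d)
      (freeColors_self_mul hI hc hd), sum_weight,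
    Finset.sum_congr rfl fun c hc => sum_pathCount_const hI hc (2 * i + 1), hconst,
    Finset.sum_const, hI]
  refine le_trans ?_ (Finset.sum_le_sum fun c _ => Finset.sum_le_sum fun d _ =>
    Nat.mul_le_mul_right _ (freeColors_mul_ge (hL _) (hL _) c d))
  rw [sum_weight]
  refine Nat.add_le_add (Nat.mul_le_mul_left _ ?_) (Nat.mul_le_mul_left _ ?_)
  · rw [← hL 0, ← Finset.sum_const]
    exact Finset.sum_le_sum fun c _ => le_sum_pathCount hM (2 * i + 1) (hL 0) c
  · exact le_cycleCount (by omega) (by omega) (hL 0) hM
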